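/- arXiv:1408.2768 — 2 statements merged into one kernel-verified Lean document; each statement's English description precedes it below -/
import Mathlib

section
/- Let f : ℝ → ℝ be a smooth (C^∞) 2π-periodic function with f(x) ≥ 0 for all x, and let h be the periodic Hilbert transform of f (i.e., h is continuous 2π-periodic with ĥ(k) = −i·sgn(k)·f̂(k) for all k ∈ ℤ, where û(k) = (1/2π)∫₀^{2π}u(x)e^{−ikx}dx); assume h is differentiable. Then ∫₀^{2π} f(x)² h′(x) dx ≥ 0. -/
open MeasureTheory

/-- The `k`-th Fourier coefficient of a `2π`-periodic function `u : ℝ → ℝ`: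
`û(k) = (1/2π) ∫₀^{2π} u(x) e^{−ikx} dx`. -/
noncomputable def fourierCoef (u : ℝ → ℝ) (k : ℤ) : ℂ :=
  (1 / (2 * Real.pi) : ℝ) *
    ∫ x in (0:ℝ)..(2 * Real.pi), (u x : ℂ) * Complex.exp (-Complex.I * k * x)

/-- `v` is the periodic Hilbert transform of `u`: `v` is continuous, `2π`-periodic, and
`v̂(k) = −i·sgn(k)·û(k)` for all `k ∈ ℤ`. -/
def IsHilbertTransformOf (v u : ℝ → ℝ) : Prop :=
  Continuous v ∧ Function.Periodic v (2 * Real.pi) ∧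
    ∀ k : ℤ, fourierCoef v k = -Complex.I * (Int.sign k : ℂ) * fourierCoef u k

/-!
Write `Λf = h'`, so that `Λ` is the Fourier multiplier `|k|`. By Parseval,
`(1/2π) ∫ g Λf = ∑ |k| b k` with `b k = re (conj (ĝ k) * f̂ k)`, while
`(1/2π) ∫ g(x) (f(x) - (f(x + t) + f(x - t)) / 2) dx = ∑ b k (1 - cos kt)`. When `g` and `f` vary in
the same direction, translation turns the left side of the second identity into half the mean of
`(g(x) - g(x + t)) (f(x) - f(x + t)) ≥ 0`. Since `(1 - cos kt) / (1 - cos t)` is a Fejér kernel, of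
integral `2π|k|` over a period, dividing by `1 - cos t` and integrating in `t` gives
`∑ |k| b k ≥ 0`. The theorem is the case `g = f²`.
-/

open Real Set

section FejerKernel

/-- The Dirichlet kernel `1 + 2 cos t + ⋯ + 2 cos (n t)`, normalized to have integral `2π` over a
period. -/
noncomputable def dirichletKernel (n : ℕ) (t : ℝ) : ℝ :=
  1 + 2 * ∑ j ∈ Finset.range n, cos ((j + 1 : ℕ) * t)

/-- The Fejér kernel as the sum, rather than the mean, of the first `n` Dirichlet kernels; it equals
`(1 - cos (n t)) / (1 - cos t)` where `cos t ≠ 1`. -/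
noncomputable def fejerKernel (n : ℕ) (t : ℝ) : ℝ :=
  ∑ m ∈ Finset.range n, dirichletKernel m t

theorem continuous_dirichletKernel (n : ℕ) : Continuous (dirichletKernel n) := by
  unfold dirichletKernel
  fun_prop

theorem continuous_fejerKernel (n : ℕ) : Continuous (fejerKernel n) :=
  continuous_finsetSum _ fun m _ => continuous_dirichletKernel m

theorem one_sub_cos_mul_dirichletKernel (n : ℕ) (t : ℝ) :
    (1 - cos t) * dirichletKernel n t = cos (n * t) - cos ((n + 1 : ℕ) * t) := by
  induction n with
  | zero => simp [dirichletKernel]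
  | succ n ih =>
    have hcos : cos ((n + 1 + 1) * t) + cos (n * t) = 2 * (cos ((n + 1) * t) * cos t) := by
      have hadd := cos_add ((n + 1) * t) t
      have hsub := cos_sub ((n + 1) * t) t
      ring_nf at hadd hsub ⊢
      linear_combination hadd + hsub
    simp only [dirichletKernel, Finset.sum_range_succ] at ih ⊢
    push_cast at ih ⊢
    linear_combination ih + hcos

theorem one_sub_cos_mul_fejerKernel (n : ℕ) (t : ℝ) :
    (1 - cos t) * fejerKernel n t = 1 - cos (n * t) := by
  simp only [fejerKernel, Finset.mul_sum, one_sub_cos_mul_dirichletKernel]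
  simpa using Finset.sum_range_sub' (fun m : ℕ => cos (m * t)) n

theorem fejerKernel_nonneg_of_cos_lt_one (n : ℕ) {t : ℝ} (ht : cos t < 1) :
    0 ≤ fejerKernel n t := by
  refine nonneg_of_mul_nonneg_right ?_ (sub_pos.2 ht)
  rw [one_sub_cos_mul_fejerKernel]
  exact sub_nonneg.2 (cos_le_one _)

theorem integral_cos_natCast_mul {n : ℕ} (hn : n ≠ 0) :
    ∫ t in (0 : ℝ)..2 * π, cos (n * t) = 0 := by
  have hsin : sin (n * (2 * π)) = 0 := by
    simpa [mul_assoc, mul_left_comm] using sin_nat_mul_pi (n * 2)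
  rw [intervalIntegral.integral_comp_mul_left cos (Nat.cast_ne_zero.2 hn)]
  simp [hsin]

theorem integral_dirichletKernel (n : ℕ) :
    ∫ t in (0 : ℝ)..2 * π, dirichletKernel n t = 2 * π := by
  have hsum : ∫ t in (0 : ℝ)..2 * π, ∑ j ∈ Finset.range n, cos ((j + 1 : ℕ) * t) = 0 := by
    rw [intervalIntegral.integral_finsetSum
      fun j _ => (by fun_prop : Continuous _).intervalIntegrable _ _]
    exact Finset.sum_eq_zero fun j _ => integral_cos_natCast_mul j.succ_ne_zero
  unfold dirichletKernel
  rw [intervalIntegral.integral_add intervalIntegrable_const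
    ((by fun_prop : Continuous _).intervalIntegrable _ _),
    intervalIntegral.integral_const_mul, hsum]
  simp

theorem integral_Ioo_fejerKernel (n : ℕ) :
    ∫ t in Ioo 0 (2 * π), fejerKernel n t = 2 * π * n := by
  rw [← integral_Ioc_eq_integral_Ioo, ← intervalIntegral.integral_of_le two_pi_pos.le]
  simp only [fejerKernel]
  rw [intervalIntegral.integral_finsetSum
    fun m _ => (continuous_dirichletKernel m).intervalIntegrable _ _]
  simp only [integral_dirichletKernel, Finset.sum_const, Finset.card_range, nsmul_eq_mul]
  exact mul_comm _ _

theorem cos_lt_one_of_mem_Ioo {t : ℝ} (ht : t ∈ Ioo 0 (2 * π)) : cos t < 1 :=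
  (cos_le_one t).lt_of_ne fun h =>
    ht.1.ne' <| (cos_eq_one_iff_of_lt_of_lt (by linarith [ht.1, pi_pos]) ht.2).1 h

theorem cos_natAbs_mul (k : ℤ) (t : ℝ) : cos (k.natAbs * t) = cos (k * t) := by
  rw [Nat.cast_natAbs, Int.cast_abs, ← cos_abs, abs_mul, abs_abs, ← abs_mul, cos_abs]

theorem tsum_abs_mul_nonneg {b : ℤ → ℝ} (hb : Summable fun k : ℤ => |(k : ℝ)| * |b k|)
    (hpos : ∀ t, 0 ≤ ∑' k : ℤ, b k * (1 - cos (k * t))) :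
    0 ≤ ∑' k : ℤ, |(k : ℝ)| * b k := by
  have hint (k : ℤ) : IntegrableOn (fun t => b k * fejerKernel k.natAbs t) (Ioo 0 (2 * π)) :=
    ((continuous_fejerKernel _).const_mul _).integrableOn_Ioc.mono_set Ioo_subset_Ioc_self
  have hval (c : ℝ) (k : ℤ) :
      ∫ t in Ioo 0 (2 * π), c * fejerKernel k.natAbs t = 2 * π * (|(k : ℝ)| * c) := by
    rw [integral_const_mul, integral_Ioo_fejerKernel, Nat.cast_natAbs, Int.cast_abs]
    ring
  have hnorm (k : ℤ) : ∫ t in Ioo 0 (2 * π), ‖b k * fejerKernel k.natAbs t‖ =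
      2 * π * (|(k : ℝ)| * |b k|) := by
    rw [← hval]
    refine setIntegral_congr_fun measurableSet_Ioo fun t ht => ?_
    have hF := fejerKernel_nonneg_of_cos_lt_one k.natAbs (cos_lt_one_of_mem_Ioo ht)
    simp only [norm_mul, norm_eq_abs, abs_of_nonneg hF]
  have hseries : 2 * π * ∑' k : ℤ, |(k : ℝ)| * b k =
      ∫ t in Ioo 0 (2 * π), ∑' k : ℤ, b k * fejerKernel k.natAbs t := by
    rw [← tsum_mul_left, ← integral_tsum_of_summable_integral_norm hint]
    · simp only [hval]
    · simpa only [hnorm] using hb.mul_left (2 * π)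
  refine nonneg_of_mul_nonneg_right ?_ two_pi_pos
  rw [hseries]
  refine setIntegral_nonneg measurableSet_Ioo fun t ht => ?_
  refine nonneg_of_mul_nonneg_right ?_ (sub_pos.2 (cos_lt_one_of_mem_Ioo ht))
  calc 0 ≤ ∑' k : ℤ, b k * (1 - cos (k * t)) := hpos t
    _ = (1 - cos t) * ∑' k : ℤ, b k * fejerKernel k.natAbs t := by
      simp only [← tsum_mul_left, mul_left_comm (1 - cos t), one_sub_cos_mul_fejerKernel,
        cos_natAbs_mul]

end FejerKernel

section Periodic

variable {E : Type*} [NormedAddCommGroup E] [NormedSpace ℝ E] {T : ℝ}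

theorem periodic_deriv {u : ℝ → E} (hu : Function.Periodic u T) :
    Function.Periodic (deriv u) T := fun x => by
  rw [← deriv_comp_add_const, funext hu]

theorem intervalIntegral_comp_add_of_periodic {u : ℝ → E} (hu : Function.Periodic u T)
    (t : ℝ) :
    ∫ x in (0 : ℝ)..T, u (x + t) = ∫ x in (0 : ℝ)..T, u x := by
  rw [intervalIntegral.integral_comp_add_right u, zero_add, add_comm,
    hu.intervalIntegral_add_eq t 0, zero_add]

theorem integral_mul_comp_add_add_le_of_monovary (hT : 0 ≤ T) {f g : ℝ → ℝ} (hf : Continuous f)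
    (hg : Continuous g) (hfT : Function.Periodic f T) (hgT : Function.Periodic g T)
    (hgf : Monovary g f) (t : ℝ) :
    (∫ x in (0 : ℝ)..T, g x * f (x + t)) + ∫ x in (0 : ℝ)..T, g x * f (x + -t) ≤
      2 * ∫ x in (0 : ℝ)..T, g x * f x := by
  have hdiag : ∫ x in (0 : ℝ)..T, g (x + t) * f (x + t) = ∫ x in (0 : ℝ)..T, g x * f x :=
    intervalIntegral_comp_add_of_periodic (hgT.mul hfT) t
  have hcross : ∫ x in (0 : ℝ)..T, g (x + t) * f x = ∫ x in (0 : ℝ)..T, g x * f (x + -t) := by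
    simpa using intervalIntegral_comp_add_of_periodic (hgT.mul (hfT.add_const (-t))) t
  have hpos : 0 ≤ ∫ x in (0 : ℝ)..T, (g (x + t) - g x) * (f (x + t) - f x) :=
    intervalIntegral.integral_nonneg hT fun x _ => by
      simpa only [mul_comm] using hgf.sub_mul_sub_nonneg x (x + t)
  have hexpand : ∫ x in (0 : ℝ)..T, (g (x + t) - g x) * (f (x + t) - f x) =
      (∫ x in (0 : ℝ)..T, g (x + t) * f (x + t)) - (∫ x in (0 : ℝ)..T, g x * f (x + t)) -
        ((∫ x in (0 : ℝ)..T, g (x + t) * f x) - ∫ x in (0 : ℝ)..T, g x * f x) := by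
    simp only [sub_mul, mul_sub]
    rw [intervalIntegral.integral_sub, intervalIntegral.integral_sub, intervalIntegral.integral_sub]
      <;> apply Continuous.intervalIntegrable <;> fun_prop
  linarith

end Periodic

section FourierCoefficients

theorem fourier_coe_two_pi {T : ℝ} (hT : T = 2 * π) (k : ℤ) (x : ℝ) :
    fourier k (x : AddCircle T) = Complex.exp (Complex.I * k * x) := by
  subst hT
  rw [fourier_coe_apply]
  congr 1
  push_cast
  field_simp

theorem fourierCoef_eq_fourierCoeffOn (u : ℝ → ℝ) (k : ℤ) :
    fourierCoef u k = fourierCoeffOn two_pi_pos (fun x => (u x : ℂ)) k := by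
  rw [fourierCoef, fourierCoeffOn_eq_integral, sub_zero, Complex.real_smul]
  congr 1
  refine intervalIntegral.integral_congr fun x _ => ?_
  rw [fourier_coe_two_pi rfl, smul_eq_mul]
  push_cast
  ring_nf

theorem norm_cexp_I_mul_intCast_mul (k : ℤ) (x : ℝ) :
    ‖Complex.exp (Complex.I * k * x)‖ = 1 := by
  simp [Complex.norm_exp]

theorem hasDerivAt_cexp_mul_ofReal (c : ℂ) (x : ℝ) :
    HasDerivAt (fun y : ℝ => Complex.exp (c * y)) (c * Complex.exp (c * x)) x := by
  simpa [mul_comm] using ((hasDerivAt_id (x : ℂ)).const_mul c).cexp.comp_ofReal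

theorem iteratedDeriv_cexp_mul_ofReal (m : ℕ) (c : ℂ) :
    iteratedDeriv m (fun x : ℝ => Complex.exp (c * x)) =
      fun x : ℝ => c ^ m * Complex.exp (c * x) := by
  induction m with
  | zero => simp
  | succ m ih =>
    ext x
    rw [iteratedDeriv_succ, ih, ((hasDerivAt_cexp_mul_ofReal c x).const_mul (c ^ m)).deriv]
    ring

theorem fourierCoef_add {u v : ℝ → ℝ} (hu : IntervalIntegrable u volume 0 (2 * π))
    (hv : IntervalIntegrable v volume 0 (2 * π)) (k : ℤ) :
    fourierCoef (u + v) k = fourierCoef u k + fourierCoef v k := by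
  have hexp {w : ℝ → ℝ} (hw : IntervalIntegrable w volume 0 (2 * π)) : IntervalIntegrable
      (fun x : ℝ => (w x : ℂ) * Complex.exp (-Complex.I * k * x)) volume 0 (2 * π) :=
    IntervalIntegrable.mul_continuousOn ⟨hw.1.ofReal, hw.2.ofReal⟩ (by fun_prop)
  simp only [fourierCoef, Pi.add_apply, Complex.ofReal_add, add_mul]
  rw [intervalIntegral.integral_add (hexp hu) (hexp hv), mul_add]

theorem fourierCoef_comp_add {u : ℝ → ℝ} (hu : Function.Periodic u (2 * π)) (t : ℝ) (k : ℤ) :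
    fourierCoef (fun x => u (x + t)) k = Complex.exp (Complex.I * k * t) * fourierCoef u k := by
  set e : ℝ → ℂ := fun x => u x * Complex.exp (-Complex.I * k * x) with he
  have hper : Function.Periodic e (2 * π) := fun x => by
    have harg : -Complex.I * k * ((x + 2 * π : ℝ) : ℂ) =
        -Complex.I * k * x + (-k : ℤ) * (2 * π * Complex.I) := by push_cast; ring
    simp only [he, hu x, harg, Complex.exp_add, Complex.exp_int_mul_two_pi_mul_I, mul_one]
  have hshift (x : ℝ) : (u (x + t) : ℂ) * Complex.exp (-Complex.I * k * x) =
      Complex.exp (Complex.I * k * t) * e (x + t) := by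
    rw [he, mul_left_comm, ← Complex.exp_add]
    push_cast
    ring_nf
  simp only [fourierCoef, hshift]
  rw [intervalIntegral.integral_const_mul, intervalIntegral_comp_add_of_periodic hper,
    mul_left_comm]

theorem fourierCoef_deriv {u : ℝ → ℝ} (hu : Differentiable ℝ u) (hper : u (2 * π) = u 0)
    (hint : IntervalIntegrable (deriv u) volume 0 (2 * π)) (k : ℤ) :
    fourierCoef (deriv u) k = Complex.I * k * fourierCoef u k := by
  set e : ℝ → ℂ := fun x => Complex.exp (-Complex.I * k * x) with he
  have hend : e (2 * π) = e 0 := by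
    simpa [he] using Complex.exp_eq_one_iff.2 ⟨-k, by push_cast; ring⟩
  have hder (x : ℝ) : HasDerivAt e (-Complex.I * k * e x) x := hasDerivAt_cexp_mul_ofReal _ x
  have hparts := intervalIntegral.integral_mul_deriv_eq_deriv_mul (fun x _ => hder x)
    (fun x _ => (hu x).hasDerivAt.ofReal_comp)
    ((by fun_prop : Continuous fun x => -Complex.I * k * e x).intervalIntegrable 0 (2 * π))
    ⟨hint.1.ofReal, hint.2.ofReal⟩
  rw [hend, hper, sub_self, zero_sub] at hparts
  simp only [fourierCoef, mul_comm _ (Complex.exp _)]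
  rw [hparts]
  simp only [mul_assoc, intervalIntegral.integral_const_mul]
  simp only [he]
  ring_nf

theorem hasSum_fourierCoef {u : ℝ → ℝ} (hu : Continuous u) (hper : Function.Periodic u (2 * π))
    (hsum : Summable (fourierCoef u)) (x : ℝ) :
    HasSum (fun k : ℤ => fourierCoef u k * Complex.exp (Complex.I * k * x)) (u x) := by
  have : Fact (0 < 2 * π) := ⟨two_pi_pos⟩
  let U : C(AddCircle (2 * π), ℂ) :=
    ⟨(hper.comp Complex.ofReal).lift,
      continuous_coinduced_dom.2 (Complex.continuous_ofReal.comp hu)⟩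
  have hU (y : ℝ) : U y = u y := rfl
  have hcoef : fourierCoeff U = fourierCoef u := by
    ext k
    rw [fourierCoeff_eq_intervalIntegral _ _ 0, fourierCoef, zero_add, Complex.real_smul]
    congr 1
    refine intervalIntegral.integral_congr fun y _ => ?_
    simp only [fourier_coe_two_pi rfl, hU, smul_eq_mul]
    push_cast
    ring_nf
  have hseries :=
    has_pointwise_sum_fourier_series_of_summable (hcoef ▸ hsum) (x : AddCircle (2 * π))
  simp only [hcoef, fourier_coe_two_pi rfl, smul_eq_mul] at hseries
  exact hseries

end FourierCoefficients

section Parseval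

theorem memLp_Ioc_of_continuous {E : Type*} [NormedAddCommGroup E] {u : ℝ → E} (hu : Continuous u)
    (p : ENNReal) (a b : ℝ) : MemLp u p (volume.restrict (Ioc a b)) := by
  obtain ⟨C, hC⟩ := (isCompact_Icc (a := a) (b := b)).exists_bound_of_continuousOn hu.continuousOn
  exact .of_bound hu.aestronglyMeasurable C <|
    ae_restrict_of_forall_mem measurableSet_Ioc fun x hx => hC x (Ioc_subset_Icc_self hx)

variable {u v : ℝ → ℝ}

theorem intervalIntegrable_of_memLp_two (hu : MemLp u 2 (volume.restrict (Ioc 0 (2 * π)))) :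
    IntervalIntegrable u volume 0 (2 * π) :=
  (intervalIntegrable_iff_integrableOn_Ioc_of_le two_pi_pos.le).2 <| hu.integrable one_le_two

theorem hasSum_sq_norm_fourierCoef (hu : MemLp u 2 (volume.restrict (Ioc 0 (2 * π)))) :
    HasSum (fun k => ‖fourierCoef u k‖ ^ 2) ((2 * π)⁻¹ * ∫ x in (0 : ℝ)..2 * π, u x ^ 2) := by
  simpa [fourierCoef_eq_fourierCoeffOn] using hasSum_sq_fourierCoeffOn two_pi_pos hu.ofReal

theorem hasSum_inner_fourierCoef (hu : MemLp u 2 (volume.restrict (Ioc 0 (2 * π))))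
    (hv : MemLp v 2 (volume.restrict (Ioc 0 (2 * π)))) :
    HasSum (fun k => inner ℝ (fourierCoef u k) (fourierCoef v k))
      ((2 * π)⁻¹ * ∫ x in (0 : ℝ)..2 * π, u x * v x) := by
  have hsq {w : ℝ → ℝ} (hw : MemLp w 2 (volume.restrict (Ioc 0 (2 * π)))) :
      IntervalIntegrable (fun x => w x ^ 2) volume 0 (2 * π) :=
    (intervalIntegrable_iff_integrableOn_Ioc_of_le two_pi_pos.le).2 hw.integrable_sq
  have huv := hu.add hv
  have hpolar (k : ℤ) : inner ℝ (fourierCoef u k) (fourierCoef v k) =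
      (‖fourierCoef (u + v) k‖ ^ 2 - ‖fourierCoef u k‖ ^ 2 - ‖fourierCoef v k‖ ^ 2) / 2 := by
    rw [fourierCoef_add (intervalIntegrable_of_memLp_two hu) (intervalIntegrable_of_memLp_two hv),
      norm_add_sq_real]
    ring
  have hval : ∫ x in (0 : ℝ)..2 * π, u x * v x =
      ((∫ x in (0 : ℝ)..2 * π, (u + v) x ^ 2) - (∫ x in (0 : ℝ)..2 * π, u x ^ 2) -
        ∫ x in (0 : ℝ)..2 * π, v x ^ 2) / 2 := by
    rw [← intervalIntegral.integral_sub (hsq huv) (hsq hu),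
      ← intervalIntegral.integral_sub ((hsq huv).sub (hsq hu)) (hsq hv),
      ← intervalIntegral.integral_div]
    congr! 2
    simp only [Pi.add_apply]
    ring
  simp only [hpolar, hval, ← mul_div_assoc, mul_sub]
  exact (((hasSum_sq_norm_fourierCoef huv).sub (hasSum_sq_norm_fourierCoef hu)).sub
    (hasSum_sq_norm_fourierCoef hv)).div_const 2

end Parseval

section Smoothness

variable {u : ℝ → ℝ}

theorem eventually_one_le_abs_intCast : ∀ᶠ k : ℤ in Filter.cofinite, (1 : ℝ) ≤ |(k : ℝ)| := by
  filter_upwards [(finite_singleton (0 : ℤ)).eventually_cofinite_notMem] with k hk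
  exact_mod_cast Int.one_le_abs hk

theorem summable_norm_fourierCoef (hu : ContDiff ℝ 1 u) (hper : Function.Periodic u (2 * π)) :
    Summable fun k => ‖fourierCoef u k‖ := by
  have hu' := memLp_Ioc_of_continuous (hu.continuous_deriv le_rfl) 2 0 (2 * π)
  have hcoef (k : ℤ) : ‖fourierCoef (deriv u) k‖ = |(k : ℝ)| * ‖fourierCoef u k‖ := by
    rw [fourierCoef_deriv (hu.differentiable one_ne_zero) (by simpa using hper 0)
      (intervalIntegrable_of_memLp_two hu')]
    simp
  have hinv : Summable fun k : ℤ => 1 / (k : ℝ) ^ 2 :=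
    summable_one_div_int_pow.2 one_lt_two
  refine .of_norm_bounded_eventually (hinv.add (hasSum_sq_norm_fourierCoef hu').summable) ?_
  filter_upwards [eventually_one_le_abs_intCast] with k hk
  have hk0 : |(k : ℝ)| ≠ 0 := by positivity
  calc ‖‖fourierCoef u k‖‖ = 1 / |(k : ℝ)| * ‖fourierCoef (deriv u) k‖ := by
        rw [norm_norm, hcoef]
        field_simp
    _ ≤ (1 / |(k : ℝ)|) ^ 2 + ‖fourierCoef (deriv u) k‖ ^ 2 := by
        nlinarith [two_mul_le_add_sq (1 / |(k : ℝ)|) ‖fourierCoef (deriv u) k‖]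
    _ = 1 / (k : ℝ) ^ 2 + ‖fourierCoef (deriv u) k‖ ^ 2 := by
        rw [div_pow, one_pow, sq_abs]

theorem summable_abs_pow_mul_norm_fourierCoef {n : ℕ} (hu : ContDiff ℝ (n + 1) u)
    (hper : Function.Periodic u (2 * π)) :
    Summable fun k : ℤ => |(k : ℝ)| ^ n * ‖fourierCoef u k‖ := by
  induction n generalizing u with
  | zero => simpa using summable_norm_fourierCoef (by simpa using hu) hper
  | succ n ih =>
    obtain ⟨hdiff, -, hderiv⟩ := contDiff_succ_iff_deriv.1 hu
    push_cast at hderiv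
    convert! ih hderiv (periodic_deriv hper) using 2 with k
    rw [fourierCoef_deriv hdiff (by simpa using hper 0)
      (hderiv.continuous.intervalIntegrable _ _)]
    simp [pow_succ, mul_assoc]

theorem contDiff_of_summable_abs_pow_mul_norm_fourierCoef {n : ℕ} (hu : Continuous u)
    (hper : Function.Periodic u (2 * π))
    (hsum : Summable fun k : ℤ => |(k : ℝ)| ^ n * ‖fourierCoef u k‖) : ContDiff ℝ n u := by
  have hcoef : Summable (fourierCoef u) := by
    refine .of_norm_bounded_eventually hsum ?_
    filter_upwards [eventually_one_le_abs_intCast] with k hk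
    exact le_mul_of_one_le_left (norm_nonneg _) (one_le_pow₀ hk)
  have hseries :
      ContDiff ℝ n fun x : ℝ => ∑' k : ℤ, fourierCoef u k * Complex.exp (Complex.I * k * x) := by
    refine contDiff_tsum_of_eventually (N := n)
      (v := fun _ (k : ℤ) => |(k : ℝ)| ^ n * ‖fourierCoef u k‖)
      (fun k => contDiff_const.mul (contDiff_const.mul Complex.ofRealCLM.contDiff).cexp)
      (fun _ _ => hsum) fun m hm => ?_
    filter_upwards [eventually_one_le_abs_intCast] with k hk x
    have hmn : m ≤ n := by exact_mod_cast hm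
    calc ‖iteratedFDeriv ℝ m
          (fun x : ℝ => fourierCoef u k * Complex.exp (Complex.I * k * x)) x‖
        = |(k : ℝ)| ^ m * ‖fourierCoef u k‖ := by
          rw [norm_iteratedFDeriv_eq_norm_iteratedDeriv, iteratedDeriv_const_mul_field,
            iteratedDeriv_cexp_mul_ofReal]
          simp only [norm_mul, norm_pow, norm_cexp_I_mul_intCast_mul, Complex.norm_I,
            Complex.norm_intCast, one_mul, mul_one]
          exact mul_comm _ _
      _ ≤ |(k : ℝ)| ^ n * ‖fourierCoef u k‖ := by gcongr
  simp only [(hasSum_fourierCoef hu hper hcoef _).tsum_eq] at hseries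
  exact Complex.reCLM.contDiff.comp hseries

end Smoothness

namespace IsHilbertTransformOf

variable {f h : ℝ → ℝ}

theorem norm_fourierCoef_le (hh : IsHilbertTransformOf h f) (k : ℤ) :
    ‖fourierCoef h k‖ ≤ ‖fourierCoef f k‖ := by
  rw [hh.2.2 k]
  rcases Int.sign_trichotomy k with hk | hk | hk <;> simp [hk]

theorem contDiff {n : ℕ} (hh : IsHilbertTransformOf h f) (hf : ContDiff ℝ (n + 1) f)
    (hfp : Function.Periodic f (2 * π)) : ContDiff ℝ n h := by
  refine contDiff_of_summable_abs_pow_mul_norm_fourierCoef hh.1 hh.2.1 <|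
    (summable_abs_pow_mul_norm_fourierCoef hf hfp).of_nonneg_of_le (fun k => by positivity)
      fun k => ?_
  gcongr
  exact hh.norm_fourierCoef_le k

theorem fourierCoef_deriv (hh : IsHilbertTransformOf h f) (hhd : Differentiable ℝ h)
    (hint : IntervalIntegrable (deriv h) volume 0 (2 * π)) (k : ℤ) :
    fourierCoef (deriv h) k = |(k : ℝ)| • fourierCoef f k := by
  have habs : ((|(k : ℝ)| : ℝ) : ℂ) = k.sign * k := by
    rw [← Int.cast_abs, ← Int.sign_mul_self_eq_abs]
    push_cast
    rfl
  rw [_root_.fourierCoef_deriv hhd (by simpa using hh.2.1 0) hint, hh.2.2 k, Complex.real_smul,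
    habs]
  linear_combination (-(k : ℂ) * k.sign * fourierCoef f k) * Complex.I_mul_I

end IsHilbertTransformOf

theorem hasSum_inner_fourierCoef_mul_one_sub_cos {f g : ℝ → ℝ} (hf : Continuous f)
    (hfp : Function.Periodic f (2 * π)) (hg : MemLp g 2 (volume.restrict (Ioc 0 (2 * π)))) (t : ℝ) :
    HasSum (fun k : ℤ => inner ℝ (fourierCoef g k) (fourierCoef f k) * (1 - cos (k * t)))
      ((2 * π)⁻¹ * ((∫ x in (0 : ℝ)..2 * π, g x * f x) -
        ((∫ x in (0 : ℝ)..2 * π, g x * f (x + t)) +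
          ∫ x in (0 : ℝ)..2 * π, g x * f (x + -t)) / 2)) := by
  have htrans (s : ℝ) : HasSum
      (fun k : ℤ => inner ℝ (fourierCoef g k)
        (Complex.exp (Complex.I * k * s) * fourierCoef f k))
      ((2 * π)⁻¹ * ∫ x in (0 : ℝ)..2 * π, g x * f (x + s)) := by
    have hshift : Continuous fun x => f (x + s) := by fun_prop
    simpa only [fourierCoef_comp_add hfp] using
      hasSum_inner_fourierCoef hg (memLp_Ioc_of_continuous hshift 2 0 (2 * π))
  have hexp (k : ℤ) : Complex.exp (Complex.I * k * t) + Complex.exp (Complex.I * k * (-t : ℝ)) =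
      ((2 * cos (k * t) : ℝ) : ℂ) := by
    push_cast
    rw [Complex.two_cos]
    ring_nf
  have hterm (k : ℤ) : inner ℝ (fourierCoef g k) (fourierCoef f k) * (1 - cos (k * t)) =
      inner ℝ (fourierCoef g k) (fourierCoef f k) -
        (inner ℝ (fourierCoef g k) (Complex.exp (Complex.I * k * t) * fourierCoef f k) +
          inner ℝ (fourierCoef g k)
            (Complex.exp (Complex.I * k * (-t : ℝ)) * fourierCoef f k)) / 2 := by
    rw [← inner_add_right, ← add_mul, hexp, ← Complex.real_smul, real_inner_smul_right]
    ring
  have hcomb := (hasSum_inner_fourierCoef hg (memLp_Ioc_of_continuous hf 2 0 (2 * π))).sub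
    (((htrans t).add (htrans (-t))).div_const 2)
  rw [funext hterm]
  convert! hcomb using 1
  ring

theorem sq_mul_lambda_nonneg_general {f g h : ℝ → ℝ} (hf : Continuous f)
    (hfp : Function.Periodic f (2 * π)) (hg : Continuous g) (hgp : Function.Periodic g (2 * π))
    (hgf : Monovary g f) (hh : IsHilbertTransformOf h f) (hhd : Differentiable ℝ h)
    (hh' : MemLp (deriv h) 2 (volume.restrict (Ioc 0 (2 * π)))) :
    0 ≤ ∫ x in (0 : ℝ)..2 * π, g x * deriv h x := by
  set b : ℤ → ℝ := fun k => inner ℝ (fourierCoef g k) (fourierCoef f k)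
  have hg2 := memLp_Ioc_of_continuous hg 2 0 (2 * π)
  have hΛ : HasSum (fun k : ℤ => |(k : ℝ)| * b k)
      ((2 * π)⁻¹ * ∫ x in (0 : ℝ)..2 * π, g x * deriv h x) := by
    simpa only [hh.fourierCoef_deriv hhd (intervalIntegrable_of_memLp_two hh'),
      real_inner_smul_right] using hasSum_inner_fourierCoef hg2 hh'
  have hpos (t : ℝ) : 0 ≤ ∑' k : ℤ, b k * (1 - cos (k * t)) := by
    rw [(hasSum_inner_fourierCoef_mul_one_sub_cos hf hfp hg2 t).tsum_eq]
    have hle := integral_mul_comp_add_add_le_of_monovary two_pi_pos.le hf hg hfp hgp hgf t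
    exact mul_nonneg (by positivity) (by linarith)
  have habs : Summable fun k : ℤ => |(k : ℝ)| * |b k| := by
    simpa only [abs_mul, abs_abs] using hΛ.summable.abs
  refine nonneg_of_mul_nonneg_right ?_ (inv_pos.2 two_pi_pos)
  exact hΛ.tsum_eq ▸ tsum_abs_mul_nonneg habs hpos

/-- For a nonnegative smooth `2π`-periodic `f` with Hilbert transform `h`
(assumed differentiable), `∫₀^{2π} f² h′ dx ≥ 0`;
this is the positivity `∫ θ² Λθ dx ≥ 0` since `Λf = (ℋf)′`. -/
theorem sq_mul_lambda_nonneg (f h : ℝ → ℝ)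
    (hf : ContDiff ℝ (⊤ : ℕ∞) f) (hfp : Function.Periodic f (2 * Real.pi))
    (hf0 : ∀ x, 0 ≤ f x)
    (hh : IsHilbertTransformOf h f) (hhd : Differentiable ℝ h) :
    0 ≤ ∫ x in (0:ℝ)..(2 * Real.pi), (f x) ^ 2 * deriv h x := by
  have hh' : Continuous (deriv h) :=
    (hh.contDiff (n := 1) (by exact_mod_cast contDiff_infty.1 hf 2) hfp).continuous_deriv le_rfl
  exact sq_mul_lambda_nonneg_general hf.continuous hfp (hf.continuous.pow 2) (hfp.comp (· ^ 2))
    (fun x y hxy => pow_le_pow_left₀ (hf0 x) hxy.le 2) hh hhd (memLp_Ioc_of_continuous hh' 2 _ _)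
end

section
/- Let n ≥ 1 and γ > 0. There exists a constant c > 0, depending only on n and γ, with the following property: for every measurable 2πℤⁿ-periodic function f : ℝⁿ → [0,∞) and every point x₀ ∈ ℝⁿ such that f(x) ≤ f(x₀) for all x ∈ ℝⁿ, f(x₀) > 0, 0 < ∫_{[−π,π]ⁿ} f(y) dy, and ∫_{[−π,π]ⁿ} f(y) dy ≤ 2^{n−2} πⁿ f(x₀), one has ∫_{[−π,π]ⁿ} ( f(x₀) − f(x₀ − y) ) / |y|^{n+γ} dy ≥ c · f(x₀)^{1+γ/n} / ( ∫_{[−π,π]ⁿ} f(y) dy )^{γ/n}. (The integrand is nonnegative since f attains its maximum at x₀, so the integral is well defined in [0,∞].) -/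
open MeasureTheory

/-!
Choose `r` so that the cube `[-r, r]ⁿ` has volume `4 ∫ f / f x₀`; the upper bound on `∫ f` says
precisely that this cube lies inside a period cell. By periodicity the integral of
`y ↦ f (x₀ - y)` over the small cube is at most `∫ f`, so its average there is at most `f x₀ / 4`.
Markov's inequality then gives `f (x₀ - y) < f x₀ / 2` on at least half of the small cube, where
the numerator of the kernel exceeds `f x₀ / 2` while `‖y‖ ≤ √n * r`.
-/

theorem measure_univ_sub_le_measure_lt {α : Type*} [MeasurableSpace α] {μ : Measure α}
    {h : α → ENNReal} {a m : ENNReal} (hh : AEMeasurable h μ) (ha₀ : a ≠ 0) (ha : a ≠ ⊤)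
    (hint : ∫⁻ x, h x ∂μ ≤ a * m) :
    μ Set.univ - m ≤ μ {x | h x < a} := by
  have markov : μ {x | a ≤ h x} ≤ m :=
    (ENNReal.mul_le_mul_iff_right ha₀ ha).1 ((mul_meas_ge_le_lintegral₀ hh a).trans hint)
  have cover : (Set.univ : Set α) ⊆ {x | h x < a} ∪ {x | a ≤ h x} :=
    fun x _ => lt_or_ge (h x) a
  rw [tsub_le_iff_right]
  calc μ Set.univ ≤ μ {x | h x < a} + μ {x | a ≤ h x} :=
        (measure_mono cover).trans (measure_union_le _ _)
    _ ≤ μ {x | h x < a} + m := by gcongr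

theorem ofReal_div_mul_measure_univ_le_lintegral_posPart_div_norm_rpow {E : Type*}
    [NormedAddCommGroup E] [MeasurableSpace E] [OpensMeasurableSpace E] {μ : Measure E}
    [IsFiniteMeasure μ] {g : E → ℝ} (hg : AEMeasurable g μ) (hg₀ : 0 < g 0) {R p : ℝ} (hp : 0 ≤ p)
    (hR : ∀ᵐ y ∂μ, ‖y‖ ≤ R)
    (havg : ∫⁻ y, ENNReal.ofReal (g y) ∂μ ≤ ENNReal.ofReal (g 0 / 4) * μ Set.univ) :
    ENNReal.ofReal (g 0 / (4 * R ^ p)) * μ Set.univ ≤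
      ∫⁻ y, ENNReal.ofReal ((g 0 - g y)⁺ / ‖y‖ ^ p) ∂μ := by
  set kernel : E → ENNReal := fun y => ENNReal.ofReal ((g 0 - g y)⁺ / ‖y‖ ^ p)
  set b := ENNReal.ofReal (g 0 / 2 / R ^ p)
  have halve (t : ℝ) :
      ENNReal.ofReal (t / 2) * μ Set.univ = ENNReal.ofReal t * (μ Set.univ / 2) := by
    rw [ENNReal.ofReal_div_of_pos two_pos, ENNReal.ofReal_ofNat]
    exact ENNReal.mul_comm_div
  have half_le : μ Set.univ / 2 ≤ μ {y | ENNReal.ofReal (g y) < ENNReal.ofReal (g 0 / 2)} := by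
    have havg' : ∫⁻ y, ENNReal.ofReal (g y) ∂μ ≤ ENNReal.ofReal (g 0 / 2) * (μ Set.univ / 2) := by
      rwa [← halve, show g 0 / 2 / 2 = g 0 / 4 by ring]
    simpa only [ENNReal.sub_half (measure_ne_top μ Set.univ)] using
      measure_univ_sub_le_measure_lt hg.ennreal_ofReal (by simpa using hg₀) ENNReal.ofReal_ne_top
        havg'
  have kernel_ge : ∀ᵐ y ∂μ, ENNReal.ofReal (g y) < ENNReal.ofReal (g 0 / 2) → b ≤ kernel y := by
    filter_upwards [hR] with y hyR hy
    have hgy : g y < g 0 / 2 := (ENNReal.ofReal_lt_ofReal_iff (half_pos hg₀)).1 hy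
    have hy₀ : 0 < ‖y‖ := by
      rw [norm_pos_iff]
      rintro rfl
      linarith
    have hnum : g 0 / 2 ≤ (g 0 - g y)⁺ := le_trans (by linarith) (le_posPart _)
    refine ENNReal.ofReal_le_ofReal ?_
    gcongr
  have kernel_meas : AEMeasurable kernel μ := by
    have hpow : Measurable fun y : E => ‖y‖ ^ p := by fun_prop
    exact (((hg.const_sub _).sup_const 0).div hpow.aemeasurable).ennreal_ofReal
  calc ENNReal.ofReal (g 0 / (4 * R ^ p)) * μ Set.univ = b * (μ Set.univ / 2) := by
        rw [← halve, show g 0 / 2 / R ^ p / 2 = g 0 / (4 * R ^ p) by ring]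
    _ ≤ b * μ {y | ENNReal.ofReal (g y) < ENNReal.ofReal (g 0 / 2)} := by gcongr
    _ ≤ b * μ {y | b ≤ kernel y} := by
        gcongr 1
        exact measure_mono_ae kernel_ge
    _ ≤ ∫⁻ y, kernel y ∂μ := mul_meas_ge_le_lintegral₀ kernel_meas b

theorem setLIntegral_sub_left_eq_of_isAddFundamentalDomain {E : Type*} [AddCommGroup E]
    [MeasurableSpace E] [MeasurableAdd E] [MeasurableNeg E] {μ : Measure E}
    [μ.IsAddLeftInvariant] [μ.IsNegInvariant] {L : AddSubgroup E} [Countable L] {s : Set E}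
    (hs : IsAddFundamentalDomain L s μ) {g : E → ENNReal} (hg : ∀ (l : L) (x : E), g (l + x) = g x)
    (x₀ : E) :
    ∫⁻ y in s, g (x₀ - y) ∂μ = ∫⁻ y in s, g y ∂μ := by
  have reflect : MeasurePreserving (fun y => x₀ - y) μ μ :=
    Measure.measurePreserving_sub_left μ x₀
  have reflected_domain : IsAddFundamentalDomain L ((fun y => x₀ - y) ⁻¹' s) μ :=
    hs.preimage_of_equiv reflect.quasiMeasurePreserving (e := Neg.neg) (Equiv.neg L).bijective
      fun l y => by
        simp only [AddSubgroup.vadd_def, AddSubgroup.coe_neg, vadd_eq_add]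
        abel
  have reflected_periodic (l : L) (y : E) : g (x₀ - (l +ᵥ y)) = g (x₀ - y) := by
    rw [← hg (-l) (x₀ - y), AddSubgroup.vadd_def, AddSubgroup.coe_neg, vadd_eq_add]
    congr 1
    abel
  calc ∫⁻ y in s, g (x₀ - y) ∂μ = ∫⁻ y in (fun y => x₀ - y) ⁻¹' s, g (x₀ - y) ∂μ :=
        hs.setLIntegral_eq reflected_domain (fun y => g (x₀ - y)) reflected_periodic
    _ = ∫⁻ y in s, g y ∂μ :=
        reflect.setLIntegral_comp_preimage_emb (MeasurableEquiv.subLeft x₀).measurableEmbedding g s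

theorem mul_rpow_neg_eq_of_mul_pow_mul_eq {K M L r : ℝ} (hK : 0 < K) (hM : 0 < M) (hr : 0 < r)
    {n : ℕ} (hn : n ≠ 0) (h : K * r ^ n * M = L) (γ : ℝ) :
    K * M * r ^ (-γ) = K ^ (1 + γ / n) * M ^ (1 + γ / n) / L ^ (γ / n) := by
  have hpow : (r ^ n) ^ (γ / n) = r ^ γ := by
    rw [← Real.rpow_natCast_mul hr.le, mul_div_cancel₀ _ (Nat.cast_ne_zero.2 hn)]
  rw [← h, Real.mul_rpow (by positivity) hM.le, Real.mul_rpow hK.le (by positivity), hpow,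
    Real.rpow_add hK, Real.rpow_add hM, Real.rpow_neg hr.le, Real.rpow_one, Real.rpow_one]
  field_simp

section EuclideanSpace

variable {ι : Type*}

/-- The homomorphism `k ↦ T k` from `ℤ^ι` to `ℝ^ι`, whose range is the period lattice `T ℤ^ι`. -/
noncomputable def scaledIntHom (ι : Type*) (T : ℝ) : (ι → ℤ) →+ EuclideanSpace ℝ ι where
  toFun k := WithLp.toLp 2 fun i => T * k i
  map_zero' := by ext i; simp
  map_add' k l := by ext i; simp [mul_add]

/-- The closed cube `[-r, r]^ι`, centred at the origin; it is empty if `r < 0` and `ι` is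
nonempty. -/
def centeredCube (ι : Type*) (r : ℝ) : Set (EuclideanSpace ℝ ι) :=
  {y | ∀ i, y i ∈ Set.Icc (-r) r}

theorem centeredCube_mono {r s : ℝ} (h : r ≤ s) : centeredCube ι r ⊆ centeredCube ι s :=
  fun _ hy i => Set.Icc_subset_Icc (neg_le_neg h) h (hy i)

theorem centeredCube_eq_preimage (r : ℝ) :
    centeredCube ι r = WithLp.ofLp ⁻¹' Set.Icc (fun _ => -r) (fun _ => r) := by
  ext y
  simp only [centeredCube, Set.mem_ofPred_eq, Set.mem_preimage, Set.mem_Icc, Pi.le_def, forall_and]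

theorem measurableSet_centeredCube [Countable ι] (r : ℝ) : MeasurableSet (centeredCube ι r) := by
  rw [centeredCube_eq_preimage]
  exact measurableSet_Icc.preimage (by fun_prop)

variable [Fintype ι]

theorem volume_centeredCube (r : ℝ) :
    volume (centeredCube ι r) = ENNReal.ofReal (2 * r) ^ Fintype.card ι := by
  rw [centeredCube_eq_preimage, (PiLp.volume_preserving_ofLp ι).measure_preimage
    measurableSet_Icc.nullMeasurableSet, Real.volume_Icc_pi]
  simp only [sub_neg_eq_add, ← two_mul, Finset.prod_const, Finset.card_univ]

theorem norm_le_sqrt_card_mul_of_mem_centeredCube {r : ℝ} (hr : 0 ≤ r) {y : EuclideanSpace ℝ ι}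
    (hy : y ∈ centeredCube ι r) : ‖y‖ ≤ √(Fintype.card ι) * r := by
  rw [EuclideanSpace.norm_eq, Real.sqrt_le_left (by positivity), mul_pow,
    Real.sq_sqrt (Nat.cast_nonneg _)]
  calc ∑ i, ‖y i‖ ^ 2 ≤ ∑ _i : ι, r ^ 2 := by
        gcongr with i
        exact abs_le.2 (hy i)
    _ = Fintype.card ι * r ^ 2 := by simp

theorem isAddFundamentalDomain_Ico_scaledIntHom {T : ℝ} (hT : 0 < T) (a : ι → ℝ) :
    IsAddFundamentalDomain (scaledIntHom ι T).range
      (WithLp.ofLp ⁻¹' Set.univ.pi fun i => Set.Ico (a i) (a i + T) :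
        Set (EuclideanSpace ℝ ι)) := by
  refine .mk' ((MeasurableSet.univ_pi fun _ => measurableSet_Ico).preimage
    (PiLp.volume_preserving_ofLp ι).measurable).nullMeasurableSet fun x => ?_
  have coord (i : ι) (k : ι → ℤ) : (scaledIntHom ι T k + x) i = x i + k i • T := by
    simp [scaledIntHom, add_comm, mul_comm]
  choose k hk hk_unique using fun i => existsUnique_add_zsmul_mem_Ico hT (x i) (a i)
  refine ⟨⟨scaledIntHom ι T k, k, rfl⟩, fun i _ => ?_, ?_⟩
  · exact (coord i k).symm ▸ hk i
  · rintro ⟨_, m, rfl⟩ hm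
    have hmk : m = k := funext fun i => hk_unique i (m i) <| by
      beta_reduce
      rw [← coord]
      exact hm i (Set.mem_univ i)
    simp only [hmk]

theorem setLIntegral_centeredCube_sub_left_of_periodic {r : ℝ} (hr : 0 < r)
    {g : EuclideanSpace ℝ ι → ENNReal} (hg : ∀ x k, g (x + scaledIntHom ι (2 * r) k) = g x)
    (x₀ : EuclideanSpace ℝ ι) :
    ∫⁻ y in centeredCube ι r, g (x₀ - y) = ∫⁻ y in centeredCube ι r, g y := by
  set cell : Set (EuclideanSpace ℝ ι) :=
    WithLp.ofLp ⁻¹' Set.univ.pi fun _ => Set.Ico (-r) (-r + 2 * r) with hcell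
  have cell_ae_eq : cell =ᵐ[volume] centeredCube ι r := by
    rw [centeredCube_eq_preimage, hcell, show -r + 2 * r = r by ring]
    exact (PiLp.volume_preserving_ofLp ι).quasiMeasurePreserving.preimage_ae_eq
      Measure.univ_pi_Ico_ae_eq_Icc
  have : Countable (scaledIntHom ι (2 * r)).range :=
    (scaledIntHom ι (2 * r)).rangeRestrict_surjective.countable
  rw [← setLIntegral_congr cell_ae_eq, ← setLIntegral_congr cell_ae_eq]
  refine setLIntegral_sub_left_eq_of_isAddFundamentalDomain
    (isAddFundamentalDomain_Ico_scaledIntHom (by positivity) _) ?_ x₀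
  rintro ⟨_, k, rfl⟩ x
  rw [add_comm, hg]

theorem setLIntegral_centeredCube_sub_left_le_of_periodic {r ρ : ℝ} (hρ : 0 < ρ) (hrρ : r ≤ ρ)
    {f : EuclideanSpace ℝ ι → ℝ} (hf : IntegrableOn f (centeredCube ι ρ)) (hf₀ : ∀ x, 0 ≤ f x)
    (hper : ∀ x k, f (x + scaledIntHom ι (2 * ρ) k) = f x) (x₀ : EuclideanSpace ℝ ι) :
    ∫⁻ y in centeredCube ι r, ENNReal.ofReal (f (x₀ - y)) ≤
      ENNReal.ofReal (∫ y in centeredCube ι ρ, f y) :=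
  calc ∫⁻ y in centeredCube ι r, ENNReal.ofReal (f (x₀ - y))
      ≤ ∫⁻ y in centeredCube ι ρ, ENNReal.ofReal (f (x₀ - y)) :=
        lintegral_mono_set (centeredCube_mono hrρ)
    _ = ∫⁻ y in centeredCube ι ρ, ENNReal.ofReal (f y) :=
        setLIntegral_centeredCube_sub_left_of_periodic (g := fun y => ENNReal.ofReal (f y)) hρ
          (fun x k => by rw [hper]) x₀
    _ = ENNReal.ofReal (∫ y in centeredCube ι ρ, f y) :=
        (ofReal_integral_eq_lintegral_ofReal hf (.of_forall hf₀)).symm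

-- The factor `2 ^ (n - 2) * r ^ n` is a quarter of the volume of the cube.
theorem le_setLIntegral_centeredCube_of_average_le {f : EuclideanSpace ℝ ι → ℝ}
    (hf : AEMeasurable f) {x₀ : EuclideanSpace ℝ ι} (hx₀ : 0 < f x₀) {γ : ℝ}
    (hγ : 0 ≤ Fintype.card ι + γ) {r : ℝ} (hr : 0 < r)
    (havg : ∫⁻ y in centeredCube ι r, ENNReal.ofReal (f (x₀ - y)) ≤
      ENNReal.ofReal (2 ^ (Fintype.card ι - 2 : ℝ) * r ^ Fintype.card ι * f x₀)) :
    ENNReal.ofReal (2 ^ (Fintype.card ι - 2 : ℝ) * f x₀ * r ^ (-γ) /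
        √(Fintype.card ι) ^ (Fintype.card ι + γ)) ≤
      ∫⁻ y in centeredCube ι r,
        ENNReal.ofReal ((f x₀ - f (x₀ - y))⁺ / ‖y‖ ^ (Fintype.card ι + γ)) := by
  set n := Fintype.card ι
  set μ : Measure (EuclideanSpace ℝ ι) := volume.restrict (centeredCube ι r)
  have two_pow : (2 : ℝ) ^ n = 4 * 2 ^ (n - 2 : ℝ) := by
    rw [Real.rpow_sub two_pos, Real.rpow_natCast, Real.rpow_two]
    ring
  have volume_eq : μ Set.univ = ENNReal.ofReal (4 * 2 ^ (n - 2 : ℝ) * r ^ n) := by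
    rw [Measure.restrict_apply_univ, volume_centeredCube, ← ENNReal.ofReal_pow (by positivity),
      mul_pow, two_pow]
  have : IsFiniteMeasure μ := ⟨volume_eq ▸ ENNReal.ofReal_lt_top⟩
  have hf_sub : AEMeasurable (fun y => f (x₀ - y)) μ :=
    (hf.comp_quasiMeasurePreserving
      (Measure.measurePreserving_sub_left volume x₀).quasiMeasurePreserving).restrict
  have norm_le : ∀ᵐ y ∂μ, ‖y‖ ≤ √n * r :=
    (ae_restrict_mem (measurableSet_centeredCube r)).mono fun _ =>
      norm_le_sqrt_card_mul_of_mem_centeredCube hr.le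
  have bound := ofReal_div_mul_measure_univ_le_lintegral_posPart_div_norm_rpow hf_sub
    (by rwa [sub_zero]) hγ norm_le <| by
      rw [sub_zero, volume_eq, ← ENNReal.ofReal_mul (by positivity)]
      convert havg using 2
      ring
  rw [sub_zero, volume_eq, ← ENNReal.ofReal_mul' (by positivity)] at bound
  convert bound using 2
  rw [Real.mul_rpow (Real.sqrt_nonneg _) hr.le, Real.rpow_add hr, Real.rpow_natCast,
    Real.rpow_neg hr.le]
  field_simp

end EuclideanSpace

theorem fractional_laplacian_lower_bound_at_max_general {ι : Type*} [Fintype ι] [Nonempty ι]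
    {γ : ℝ} (hγ : 0 ≤ Fintype.card ι + γ) {ρ : ℝ} (hρ : 0 < ρ) {f : EuclideanSpace ℝ ι → ℝ}
    (hf : AEMeasurable f) (hf₀ : ∀ x, 0 ≤ f x)
    (hper : ∀ x k, f (x + scaledIntHom ι (2 * ρ) k) = f x) (x₀ : EuclideanSpace ℝ ι)
    (hpos : 0 < ∫ y in centeredCube ι ρ, f y)
    (hle : ∫ y in centeredCube ι ρ, f y ≤
      2 ^ (Fintype.card ι - 2 : ℝ) * ρ ^ Fintype.card ι * f x₀) :
    ENNReal.ofReal ((2 ^ (Fintype.card ι - 2 : ℝ)) ^ (1 + γ / Fintype.card ι) /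
          √(Fintype.card ι) ^ (Fintype.card ι + γ) *
        f x₀ ^ (1 + γ / Fintype.card ι) /
          (∫ y in centeredCube ι ρ, f y) ^ (γ / Fintype.card ι)) ≤
      ∫⁻ y in centeredCube ι ρ,
        ENNReal.ofReal ((f x₀ - f (x₀ - y))⁺ / ‖y‖ ^ (Fintype.card ι + γ)) := by
  set n := Fintype.card ι
  set K : ℝ := 2 ^ (n - 2 : ℝ)
  set L := ∫ y in centeredCube ι ρ, f y
  have hn : n ≠ 0 := Fintype.card_ne_zero
  have hK : 0 < K := by positivity
  have hx₀ : 0 < f x₀ := pos_of_mul_pos_right (hpos.trans_le hle) (by positivity)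
  obtain ⟨r, hr, hrL⟩ : ∃ r : ℝ, 0 < r ∧ K * r ^ n * f x₀ = L :=
    ⟨(L / (K * f x₀)) ^ (n⁻¹ : ℝ), by positivity, by
      rw [Real.rpow_inv_natCast_pow (by positivity) hn]
      field_simp⟩
  have hrρ : r ≤ ρ := by
    rw [← hrL, mul_le_mul_iff_left₀ hx₀, mul_le_mul_iff_right₀ hK] at hle
    exact le_of_pow_le_pow_left₀ hn hρ.le hle
  have average_le : ∫⁻ y in centeredCube ι r, ENNReal.ofReal (f (x₀ - y)) ≤
      ENNReal.ofReal (K * r ^ n * f x₀) :=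
    hrL ▸ setLIntegral_centeredCube_sub_left_le_of_periodic hρ hrρ
      (.of_integral_ne_zero hpos.ne') hf₀ hper x₀
  rw [div_mul_eq_mul_div, div_right_comm, ← mul_rpow_neg_eq_of_mul_pow_mul_eq hK hx₀ hr hn hrL]
  exact (le_setLIntegral_centeredCube_of_average_le hf hx₀ hγ hr average_le).trans
    (lintegral_mono_set (centeredCube_mono hrρ))

/-- Nonlinear lower bound for the fractional Laplacian at a point of maximum:
for `n ≥ 1` and `γ > 0` there is `c = c(n,γ) > 0` such that for every measurable,
nonnegative, `2πℤⁿ`-periodic `f` attaining its maximum at `x₀`, with `f(x₀) > 0`,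
`0 < ∫_{[−π,π]ⁿ} f ≤ 2^{n−2} πⁿ f(x₀)`, one has
`∫_{[−π,π]ⁿ} (f(x₀) − f(x₀−y))/|y|^{n+γ} dy ≥ c f(x₀)^{1+γ/n}/(∫ f)^{γ/n}`. -/
theorem fractional_laplacian_lower_bound_at_max (n : ℕ) (hn : 1 ≤ n)
    (γ : ℝ) (hγ : 0 < γ) :
    ∃ c : ℝ, 0 < c ∧
      ∀ (f : EuclideanSpace ℝ (Fin n) → ℝ), Measurable f → (∀ x, 0 ≤ f x) →
        (∀ (x : EuclideanSpace ℝ (Fin n)) (k : Fin n → ℤ),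
          f (x + (WithLp.equiv 2 (Fin n → ℝ)).symm (fun i => 2 * Real.pi * (k i : ℝ))) = f x) →
        ∀ x₀ : EuclideanSpace ℝ (Fin n), (∀ x, f x ≤ f x₀) → 0 < f x₀ →
        (0 < ∫ y in {y : EuclideanSpace ℝ (Fin n) | ∀ i, y i ∈ Set.Icc (-Real.pi) Real.pi},
            f y) →
        (∫ y in {y : EuclideanSpace ℝ (Fin n) | ∀ i, y i ∈ Set.Icc (-Real.pi) Real.pi},
            f y) ≤ (2:ℝ) ^ ((n:ℝ) - 2) * Real.pi ^ n * f x₀ →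
        ENNReal.ofReal (c * f x₀ ^ (1 + γ / n) /
            (∫ y in {y : EuclideanSpace ℝ (Fin n) | ∀ i, y i ∈ Set.Icc (-Real.pi) Real.pi},
              f y) ^ (γ / n)) ≤
          ∫⁻ y in {y : EuclideanSpace ℝ (Fin n) | ∀ i, y i ∈ Set.Icc (-Real.pi) Real.pi},
            ENNReal.ofReal ((f x₀ - f (x₀ - y)) / ‖y‖ ^ ((n : ℝ) + γ)) := by
  have : NeZero n := ⟨by omega⟩
  refine ⟨(2 ^ (n - 2 : ℝ)) ^ (1 + γ / n) / √n ^ (n + γ), by positivity,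
    fun f hf hf₀ hper x₀ hmax _ hpos hle => ?_⟩
  simpa only [centeredCube, Fintype.card_fin, posPart_of_nonneg (sub_nonneg.2 (hmax _))] using
    fractional_laplacian_lower_bound_at_max_general (by positivity) Real.pi_pos hf.aemeasurable
      hf₀ hper x₀ hpos (by rwa [Fintype.card_fin])
end
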